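/- For every k ∈ {1,…,2^{K−1}}, Ψ(2k) = Φ(k). -/

import Mathlib

/-- `η(k) = 1` if `k` is even and `η(k) = ν₂(k−1) + 1` if `k` is odd (used for `k ≥ 2`),
where `ν₂(m) = padicValNat 2 m` is the 2-adic valuation. -/
def eta (k : ℕ) : ℕ := if Even k then 1 else padicValNat 2 (k - 1) + 1

/-- `θ(k) = 2` if `k` is even and `θ(k) = ν₂(k−1) + 2` if `k` is odd (used for `k ≥ 2`). -/
def theta (k : ℕ) : ℕ := if Even k then 2 else padicValNat 2 (k - 1) + 2

/-- The set-level form `Ψ` of the map `ψ` of the paper: `Ψ(1) = ∅` and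
`Ψ(k) = Ψ(k−1) △ {η(k)}` for `k ≥ 2` (`Ψ(0)` is junk). -/
def Psi : ℕ → Finset ℕ
  | 0 => ∅
  | 1 => ∅
  | k + 2 => symmDiff (Psi (k + 1)) {eta (k + 2)}

/-- The set-level form `Φ` of the odd-ordered map `φ` of the paper: `Φ(1) = {1}`
and `Φ(k) = Φ(k−1) △ {1, θ(k)}` for `k ≥ 2` (`Φ(0)` is junk). -/
def Phi : ℕ → Finset ℕ
  | 0 => ∅
  | 1 => {1}
  | k + 2 => symmDiff (Phi (k + 1)) {1, theta (k + 2)}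

/-!
Since `ν₂(2m) = ν₂(m) + 1`, two consecutive steps of `Ψ`, from `2k` to `2k + 2`, toggle
`η(2k + 1) = θ(k + 1)` and then `η(2k + 2) = 1`; as `θ ≥ 2`, these are exactly the two elements
that one step of `Φ`, from `k` to `k + 1`, toggles.
-/

open scoped symmDiff

theorem finset_singleton_symmDiff_singleton {α : Type*} [DecidableEq α] {a b : α} (h : a ≠ b) :
    ({a} ∆ {b} : Finset α) = {a, b} :=
  Finset.symmDiff_eq_union (Finset.disjoint_singleton.mpr h)

theorem padicValNat_two_eq_zero_of_even_succ {n : ℕ} (h : Even (n + 1)) : padicValNat 2 n = 0 :=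
  padicValNat.eq_zero_of_not_dvd fun hn => Nat.even_add_one.mp h (even_iff_two_dvd.mpr hn)

theorem eta_succ (n : ℕ) : eta (n + 1) = padicValNat 2 n + 1 := by
  rw [eta, Nat.add_sub_cancel]
  split_ifs with h
  · rw [padicValNat_two_eq_zero_of_even_succ h]
  · rfl

theorem theta_succ (n : ℕ) : theta (n + 1) = padicValNat 2 n + 2 := by
  rw [theta, Nat.add_sub_cancel]
  split_ifs with h
  · rw [padicValNat_two_eq_zero_of_even_succ h]
  · rfl

theorem eta_two_mul (k : ℕ) : eta (2 * k) = 1 :=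
  if_pos (even_two_mul k)

theorem eta_two_mul_add_one {k : ℕ} (hk : 1 ≤ k) : eta (2 * k + 1) = theta (k + 1) := by
  have valuation_double : padicValNat 2 (2 * k) = padicValNat 2 k + 1 := by
    rw [padicValNat.mul two_ne_zero (by omega), padicValNat_self, add_comm]
  rw [eta_succ, theta_succ, valuation_double]

theorem one_ne_theta_succ (n : ℕ) : 1 ≠ theta (n + 1) := by
  rw [theta_succ]
  omega

theorem psi_succ {k : ℕ} (hk : 1 ≤ k) : Psi (k + 1) = Psi k ∆ {eta (k + 1)} := by
  obtain ⟨n, rfl⟩ := Nat.exists_eq_add_of_le' hk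
  rfl

theorem phi_succ {k : ℕ} (hk : 1 ≤ k) : Phi (k + 1) = Phi k ∆ {1, theta (k + 1)} := by
  obtain ⟨n, rfl⟩ := Nat.exists_eq_add_of_le' hk
  rfl

theorem psi_two_mul_succ {k : ℕ} (hk : 1 ≤ k) :
    Psi (2 * (k + 1)) = Psi (2 * k) ∆ {1, theta (k + 1)} :=
  calc
    Psi (2 * (k + 1)) = Psi (2 * k + 1) ∆ {eta (2 * (k + 1))} := psi_succ (by omega)
    _ = Psi (2 * k) ∆ {eta (2 * k + 1)} ∆ {eta (2 * (k + 1))} := by rw [psi_succ (by omega)]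
    _ = Psi (2 * k) ∆ {theta (k + 1)} ∆ {1} := by rw [eta_two_mul_add_one hk, eta_two_mul]
    _ = Psi (2 * k) ∆ {1, theta (k + 1)} := by
      rw [symmDiff_assoc, symmDiff_comm {theta (k + 1)},
        finset_singleton_symmDiff_singleton (one_ne_theta_succ k)]

theorem psi_two : Psi 2 = {1} :=
  calc
    Psi 2 = ∅ ∆ {eta (2 * 1)} := rfl
    _ = {1} := by rw [eta_two_mul, ← Finset.bot_eq_empty, bot_symmDiff]

theorem psi_two_mul_eq_phi_general {k : ℕ} (hk : 1 ≤ k) : Psi (2 * k) = Phi k := by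
  induction k, hk using Nat.le_induction with
  | base => exact psi_two
  | succ k hk ih => rw [psi_two_mul_succ hk, phi_succ hk, ih]

/-- Equation (2.9): for every `k ∈ {1,…,2^(K−1)}`, `Ψ(2k) = Φ(k)`. -/
theorem psi_two_mul_eq_phi (K : ℕ) (hK : 1 ≤ K) :
    ∀ k, 1 ≤ k → k ≤ 2 ^ (K - 1) → Psi (2 * k) = Phi k :=
  fun _ hk _ => psi_two_mul_eq_phi_general hk
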